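/- arXiv:2010.15169 — 2 statements merged into one kernel-verified Lean document; each statement's English description precedes it below -/
import Mathlib

section
/- Let P_GF, P_GB, σ², α, y, z, λ_GF, λ_GB > 0, and let H_GF, H_GB be independent exponential random variables with means λ_GF and λ_GB. Set g_GF = P_GF·H_GF·y^{-α}, g_GB = P_GB·H_GB·z^{-α}, Ψ(t) = P_GF·y^{-α}·t·z^α/(λ_GB·P_GB) + 1/λ_GF, and c = σ²·y^α/P_GF. Then for every t > 0, P( g_GB > t·(g_GF + σ²) and g_GF < σ² ) = exp( - t·σ²·z^α/(λ_GB·P_GB) ) · (1 - e^{-Ψ(t)·c}) / (λ_GF·Ψ(t)). -/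
open MeasureTheory ProbabilityTheory Real Set

/-! Path loss and transmit power only rescale the two gains, so the event has the form
`a X + b < Y, X < c` with `X`, `Y` independent exponentials. Conditioning on `X`, the tail
`P(Y > u) = e^{-qu}` gives its probability as `e^{-qb} E[e^{-qaX}; X < c]`, a truncated Laplace
transform of the law of `X`. -/

section ExpMeasure

variable {r : ℝ}

lemma expMeasure_real_Ioi (hr : 0 < r) {x : ℝ} (hx : 0 ≤ x) :
    (expMeasure r).real (Ioi x) = exp (-(r * x)) := by
  have := isProbabilityMeasure_expMeasure hr
  rw [← compl_Iic, probReal_compl_eq_one_sub measurableSet_Iic, ← cdf_eq_real,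
    cdf_expMeasure_eq hr, if_pos hx, sub_sub_cancel]

lemma eq_expMeasure_of_real_Ioi {ν : Measure ℝ} [IsProbabilityMeasure ν] (hr : 0 < r)
    (h : ∀ x, 0 ≤ x → ν.real (Ioi x) = exp (-(r * x))) : ν = expMeasure r := by
  have := isProbabilityMeasure_expMeasure hr
  have real_Iic {x : ℝ} (hx : 0 ≤ x) : ν.real (Iic x) = 1 - exp (-(r * x)) := by
    rw [← compl_Ioi, probReal_compl_eq_one_sub measurableSet_Ioi, h x hx]
  refine Measure.eq_of_cdf _ _ (StieltjesFunction.ext fun x ↦ ?_)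
  rw [cdf_eq_real, cdf_expMeasure_eq hr]
  split_ifs with hx
  · exact real_Iic hx
  · have real_Iic_zero : ν.real (Iic 0) = 0 := by simp [real_Iic le_rfl]
    exact measureReal_mono_null (Iic_subset_Iic.2 (not_le.1 hx).le) real_Iic_zero

lemma hasLaw_expMeasure_of_tail {Ω : Type*} [MeasurableSpace Ω] {μ : Measure Ω}
    [IsProbabilityMeasure μ] {X : Ω → ℝ} {m : ℝ} (hX : AEMeasurable X μ) (hm : 0 < m)
    (h : ∀ s, 0 ≤ s → μ.real {ω | s < X ω} = exp (-s / m)) :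
    HasLaw X (expMeasure (1 / m)) μ where
  map_eq := by
    have := Measure.isProbabilityMeasure_map hX
    refine eq_expMeasure_of_real_Ioi (one_div_pos.2 hm) fun s hs ↦ ?_
    rw [map_measureReal_apply_of_aemeasurable hX measurableSet_Ioi, one_div_mul_eq_div, ← neg_div]
    exact h s hs

lemma expMeasure_eq_withDensity (r : ℝ) :
    expMeasure r = volume.withDensity (exponentialPDF r) := rfl

lemma ae_nonneg_expMeasure (r : ℝ) : ∀ᵐ x ∂expMeasure r, 0 ≤ x := by
  simp only [ae_iff, not_le]
  change expMeasure r (Iio 0) = 0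
  rw [expMeasure_eq_withDensity, withDensity_apply _ measurableSet_Iio,
    lintegral_exponentialPDF_of_nonpos le_rfl]

lemma setIntegral_Iio_expMeasure (hr : 0 ≤ r) {c : ℝ} (hc : 0 ≤ c) (f : ℝ → ℝ) :
    ∫ x in Iio c, f x ∂expMeasure r = ∫ x in 0..c, r * exp (-(r * x)) * f x := by
  have density_eq (x : ℝ) : (exponentialPDF r x).toReal * f x
      = (Ici 0).indicator (fun x ↦ r * exp (-(r * x)) * f x) x := by
    by_cases hx : 0 ≤ x
    · rw [indicator_of_mem (mem_Ici.2 hx), exponentialPDF_of_nonneg hx,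
        ENNReal.toReal_ofReal (by positivity)]
    · rw [indicator_of_notMem (by simpa using hx), exponentialPDF_of_neg (not_le.1 hx),
        ENNReal.toReal_zero, zero_mul]
  have pdf_measurable : Measurable (exponentialPDF r) :=
    (measurable_exponentialPDFReal r).ennreal_ofReal
  rw [expMeasure_eq_withDensity, setIntegral_withDensity_eq_setIntegral_toReal_smul
    pdf_measurable (ae_of_all _ fun _ ↦ ENNReal.ofReal_lt_top) f measurableSet_Iio]
  simp only [smul_eq_mul, density_eq]
  rw [setIntegral_indicator measurableSet_Ici, inter_comm, Ici_inter_Iio,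
    integral_Ico_eq_integral_Ioc, intervalIntegral.integral_of_le hc]

lemma intervalIntegral_exp_neg_mul {k : ℝ} (hk : k ≠ 0) (c : ℝ) :
    ∫ x in 0..c, exp (-(k * x)) = (1 - exp (-(k * c))) / k := by
  rw [eq_div_iff hk, mul_comm, ← intervalIntegral.integral_const_mul,
    intervalIntegral.integral_eq_sub_of_hasDerivAt (fun _ _ ↦ hasDerivAt_neg_exp_mul_exp)
      (Continuous.intervalIntegrable (by fun_prop) _ _)]
  simp only [mul_zero, neg_zero, exp_zero]
  ring

lemma setIntegral_Iio_exp_neg_mul_expMeasure (hr : 0 ≤ r) {k c : ℝ} (hk : k + r ≠ 0)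
    (hc : 0 ≤ c) :
    ∫ x in Iio c, exp (-(k * x)) ∂expMeasure r
      = r * (1 - exp (-((k + r) * c))) / (k + r) := by
  have integrand_eq (x : ℝ) :
      r * exp (-(r * x)) * exp (-(k * x)) = r * exp (-((k + r) * x)) := by
    rw [mul_assoc, ← exp_add]
    ring_nf
  simp only [setIntegral_Iio_expMeasure hr hc, integrand_eq]
  rw [intervalIntegral.integral_const_mul, intervalIntegral_exp_neg_mul hk, mul_div_assoc]

end ExpMeasure

section Independence

variable {Ω : Type*} [MeasurableSpace Ω] {μ : Measure Ω} [IsFiniteMeasure μ] {Y : Ω → ℝ}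

lemma measureReal_comp_lt_and_mem_eq_setIntegral {E : Type*} [MeasurableSpace E] {X : Ω → E}
    {ν : Measure E} {ρ : Measure ℝ}
    (hX : HasLaw X ν μ) (hY : HasLaw Y ρ μ) (hXY : IndepFun X Y μ)
    {f : E → ℝ} (hf : Measurable f) {s : Set E} (hs : MeasurableSet s) :
    μ.real {ω | f (X ω) < Y ω ∧ X ω ∈ s} = ∫ x in s, ρ.real (Ioi (f x)) ∂ν := by
  have : IsFiniteMeasure ν := hX.isFiniteMeasure_iff.1 inferInstance
  have : IsFiniteMeasure ρ := hY.isFiniteMeasure_iff.1 inferInstance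
  have hS : MeasurableSet {p : E × ℝ | f p.1 < p.2 ∧ p.1 ∈ s} :=
    (measurableSet_lt (hf.comp measurable_fst) measurable_snd).inter (measurable_fst hs)
  have section_eq (x : E) : ρ (Prod.mk x ⁻¹' {p : E × ℝ | f p.1 < p.2 ∧ p.1 ∈ s})
      = s.indicator (fun x ↦ ρ (Ioi (f x))) x := by
    by_cases hx : x ∈ s
    · simp [hx, Ioi]
    · simp [hx]
  have tail_measurable : Measurable fun x ↦ ρ (Ioi (f x)) :=
    (show Antitone fun u ↦ ρ (Ioi u) from
      fun _ _ h ↦ measure_mono (Ioi_subset_Ioi h)).measurable.comp hf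
  rw [(hXY.hasLaw_prod hX hY).measureReal_eq hS, measureReal_def, Measure.prod_apply hS]
  simp only [section_eq]
  rw [lintegral_indicator hs]
  exact (integral_toReal tail_measurable.aemeasurable
    (ae_of_all _ fun _ ↦ measure_lt_top ρ _)).symm

lemma measureReal_comp_lt_exponential_and_mem {E : Type*} [MeasurableSpace E] {X : Ω → E}
    {ν : Measure E} {q : ℝ} (hq : 0 < q)
    (hX : HasLaw X ν μ) (hY : HasLaw Y (expMeasure q) μ) (hXY : IndepFun X Y μ)
    {f : E → ℝ} (hf : Measurable f) (hf₀ : ∀ᵐ x ∂ν, 0 ≤ f x) {s : Set E} (hs : MeasurableSet s) :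
    μ.real {ω | f (X ω) < Y ω ∧ X ω ∈ s} = ∫ x in s, exp (-(q * f x)) ∂ν := by
  rw [measureReal_comp_lt_and_mem_eq_setIntegral hX hY hXY hf hs]
  exact integral_congr_ae (ae_restrict_of_ae (hf₀.mono fun _ ↦ expMeasure_real_Ioi hq))

lemma measureReal_affine_lt_exponential_and_lt {X : Ω → ℝ} {p q a b c : ℝ}
    (hp : 0 < p) (hq : 0 < q) (ha : 0 ≤ a) (hb : 0 ≤ b) (hc : 0 ≤ c)
    (hX : HasLaw X (expMeasure p) μ) (hY : HasLaw Y (expMeasure q) μ) (hXY : IndepFun X Y μ) :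
    μ.real {ω | a * X ω + b < Y ω ∧ X ω < c}
      = exp (-(q * b)) * (p * (1 - exp (-((q * a + p) * c))) / (q * a + p)) := by
  have affine_nonneg : ∀ᵐ x ∂expMeasure p, 0 ≤ a * x + b :=
    (ae_nonneg_expMeasure p).mono fun x hx ↦ by positivity
  have exp_affine (x : ℝ) :
      exp (-(q * (a * x + b))) = exp (-(q * b)) * exp (-(q * a * x)) := by
    rw [← exp_add]
    ring_nf
  calc μ.real {ω | a * X ω + b < Y ω ∧ X ω < c}
      = ∫ x in Iio c, exp (-(q * (a * x + b))) ∂expMeasure p :=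
        measureReal_comp_lt_exponential_and_mem hq hX hY hXY (by fun_prop) affine_nonneg
          measurableSet_Iio
    _ = exp (-(q * b)) * ∫ x in Iio c, exp (-(q * a * x)) ∂expMeasure p := by
        simp only [exp_affine, integral_const_mul]
    _ = exp (-(q * b)) * (p * (1 - exp (-((q * a + p) * c))) / (q * a + p)) := by
        rw [setIntegral_Iio_exp_neg_mul_expMeasure hp.le (by positivity) hc]

end Independence

section PathLoss

variable {P d : ℝ}

lemma mul_mul_rpow_neg_lt_iff (hP : 0 < P) (hd : 0 < d) (α h s : ℝ) :
    P * h * d ^ (-α) < s ↔ h < s * d ^ α / P := by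
  rw [rpow_neg hd.le, ← div_eq_mul_inv, div_lt_iff₀ (rpow_pos_of_pos hd α), lt_div_iff₀' hP]

lemma lt_mul_mul_rpow_neg_iff (hP : 0 < P) (hd : 0 < d) (α h s : ℝ) :
    s < P * h * d ^ (-α) ↔ s * d ^ α / P < h := by
  rw [rpow_neg hd.le, ← div_eq_mul_inv, lt_div_iff₀ (rpow_pos_of_pos hd α), div_lt_iff₀' hP]

end PathLoss

/-- Inner x-integral of the first term of (B.1) in the proof of Lemma 2:
with independent exponential channel gains `H_GF, H_GB` (means `lamGF, lamGB`),
`g_GF = P_GF·H_GF·y⁻ᵅ`, `g_GB = P_GB·H_GB·z⁻ᵅ`, `Ψ(t) = P_GF·y⁻ᵅ·t·zᵅ/(lamGB·P_GB) + 1/lamGF`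
and `c = σ²·yᵅ/P_GF`, for every `t > 0`,
`P(g_GB > t·(g_GF + σ²) ∧ g_GF < σ²)
  = exp(-t·σ²·zᵅ/(lamGB·P_GB)) · (1 - e^{-Ψ(t)·c}) / (lamGF·Ψ(t))`. -/
theorem gb_truncated_coverage
    {Ω : Type*} [MeasurableSpace Ω] (μ : Measure Ω) [IsProbabilityMeasure μ]
    (P_GF P_GB σ2 α y z lamGF lamGB : ℝ)
    (hPGF : 0 < P_GF) (hPGB : 0 < P_GB) (hσ2 : 0 < σ2) (hα : 0 < α)
    (hy : 0 < y) (hz : 0 < z) (hlamGF : 0 < lamGF) (hlamGB : 0 < lamGB)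
    (H_GF H_GB : Ω → ℝ) (hmGF : Measurable H_GF) (hmGB : Measurable H_GB)
    (hind : IndepFun H_GF H_GB μ)
    (hGFexp : ∀ s : ℝ, 0 ≤ s → (μ {ω | s < H_GF ω}).toReal = Real.exp (-s / lamGF))
    (hGBexp : ∀ s : ℝ, 0 ≤ s → (μ {ω | s < H_GB ω}).toReal = Real.exp (-s / lamGB))
    (Ψ : ℝ → ℝ) (hΨ : ∀ t, Ψ t = P_GF * y ^ (-α) * t * z ^ α / (lamGB * P_GB) + 1 / lamGF)
    (c : ℝ) (hc : c = σ2 * y ^ α / P_GF)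
    (t : ℝ) (ht : 0 < t) :
    (μ {ω | t * (P_GF * H_GF ω * y ^ (-α) + σ2) < P_GB * H_GB ω * z ^ (-α)
          ∧ P_GF * H_GF ω * y ^ (-α) < σ2}).toReal
      = Real.exp (-(t * σ2 * z ^ α) / (lamGB * P_GB)) *
          (1 - Real.exp (-(Ψ t * c))) / (lamGF * Ψ t) := by
  set a := t * P_GF * y ^ (-α) * z ^ α / P_GB with ha
  set b := t * σ2 * z ^ α / P_GB with hb
  have event_eq : {ω | t * (P_GF * H_GF ω * y ^ (-α) + σ2) < P_GB * H_GB ω * z ^ (-α)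
      ∧ P_GF * H_GF ω * y ^ (-α) < σ2} = {ω | a * H_GF ω + b < H_GB ω ∧ H_GF ω < c} := by
    ext ω
    have threshold_eq : t * (P_GF * H_GF ω * y ^ (-α) + σ2) * z ^ α / P_GB
        = a * H_GF ω + b := by ring
    simp only [mem_ofPred_eq, lt_mul_mul_rpow_neg_iff hPGB hz, mul_mul_rpow_neg_lt_iff hPGF hy,
      threshold_eq, hc]
  have Ψ_eq : Ψ t = 1 / lamGB * a + 1 / lamGF := by
    rw [hΨ, ha]
    field_simp
  have hb_exp : 1 / lamGB * b = t * σ2 * z ^ α / (lamGB * P_GB) := by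
    rw [hb, one_div_mul_eq_div, div_div, mul_comm P_GB]
  rw [event_eq, ← measureReal_def, measureReal_affine_lt_exponential_and_lt
    (one_div_pos.2 hlamGF) (one_div_pos.2 hlamGB) (by positivity) (by positivity)
    (hc ▸ by positivity) (hasLaw_expMeasure_of_tail hmGF.aemeasurable hlamGF hGFexp)
    (hasLaw_expMeasure_of_tail hmGB.aemeasurable hlamGB hGBexp) hind, ← Ψ_eq, hb_exp]
  field_simp
end

section
/- Fix σ², α, y, z, λ_GF, λ_GB, P_GB, γ > 0, and for P > 0 set Ψ(P) = P·y^{-α}·γ·z^α/(λ_GB·P_GB) + 1/λ_GF and b(P) = Ψ(P)·σ²·y^α/P. Then the conditional GF ergodic rate R(P) := -( 1/(ln 2 · λ_GF · Ψ(P)) ) · exp( -γ·σ²·z^α/(λ_GB·P_GB) ) · e^{b(P)} · Ei(-b(P)) tends to 0 as P → ∞, where Ei(-b) = ∫_{-∞}^{-b} e^u/u du. -/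
open MeasureTheory Real Set Filter

/-!
The argument `b(P)` of the exponential integral converges to a positive constant, because `Ψ` is
affine in `P`. Since `|Ei(-t)| ≤ e^{-t} / t` for `t > 0`, the factor `e^{b(P)} Ei(-b(P))` stays
bounded, while the prefactor `1 / Ψ(P)` tends to `0`.
-/

/-- The exponential integral `Ei` on the negative half-line. For `0 ≤ x` the integrand has a
non-integrable singularity at `0`, so the value is `0`, not the Cauchy principal value. -/
noncomputable def expIntegralEi (x : ℝ) : ℝ :=
  ∫ u in Iio x, exp u / u

lemma abs_expIntegralEi_le {x : ℝ} (hx : x < 0) : |expIntegralEi x| ≤ exp x / -x := by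
  have h_dom : ∀ u ∈ Iio x, ‖exp u / u‖ ≤ exp u / -x := fun u (hu : u < x) => by
    rw [norm_div, norm_of_nonneg (exp_pos u).le, norm_of_nonpos (hu.trans hx).le]
    have := neg_pos.2 hx
    gcongr
  have h_int : IntegrableOn (fun u => exp u / -x) (Iio x) :=
    ((integrableOn_exp_Iic x).mono_set Iio_subset_Iic_self).div_const _
  calc |expIntegralEi x|
      ≤ ∫ u in Iio x, exp u / -x :=
        norm_integral_le_of_norm_le h_int (ae_restrict_of_forall_mem measurableSet_Iio h_dom)
    _ = exp x / -x := by
        rw [integral_div, ← integral_Iic_eq_integral_Iio, integral_exp_Iic]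

lemma abs_exp_mul_expIntegralEi_neg_le {t : ℝ} (ht : 0 < t) :
    |exp t * expIntegralEi (-t)| ≤ 1 / t :=
  calc |exp t * expIntegralEi (-t)|
      = exp t * |expIntegralEi (-t)| := by rw [abs_mul, abs_exp]
    _ ≤ exp t * (exp (-t) / t) := by
        gcongr
        simpa only [neg_neg] using abs_expIntegralEi_le (neg_lt_zero.2 ht)
    _ = 1 / t := by rw [← mul_div_assoc, ← exp_add, add_neg_cancel, exp_zero]

lemma tendsto_zero_mul_exp_mul_expIntegralEi_neg {ι : Type*} {l : Filter ι} {f b : ι → ℝ}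
    {c : ℝ} (hf : Tendsto f l (nhds 0)) (hc : 0 < c) (hb : ∀ᶠ i in l, c ≤ b i) :
    Tendsto (fun i => f i * (exp (b i) * expIntegralEi (-b i))) l (nhds 0) := by
  refine hf.zero_mul_isBoundedUnder_le (isBoundedUnder_of_eventually_le (a := 1 / c) ?_)
  filter_upwards [hb] with i hi
  exact (abs_exp_mul_expIntegralEi_neg_le (hc.trans_le hi)).trans
    (one_div_le_one_div_of_le hc hi)

lemma tendsto_mul_add_div_self_atTop (κ μ : ℝ) :
    Tendsto (fun P => (κ * P + μ) / P) atTop (nhds κ) := by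
  have h_lim : Tendsto (fun P => κ + μ / P) atTop (nhds κ) := by
    simpa only [add_zero, id] using (tendsto_const_nhds.div_atTop tendsto_id).const_add κ
  refine h_lim.congr' ?_
  filter_upwards [eventually_ne_atTop 0] with P hP
  rw [add_div, mul_div_cancel_right₀ κ hP]

theorem gf_conditional_rate_tendsto_zero_general
    (σ2 α y z lamGF lamGB P_GB γ : ℝ)
    (hσ2 : 0 < σ2) (hy : 0 < y) (hz : 0 < z)
    (hlamGF : lamGF ≠ 0) (hlamGB : 0 < lamGB) (hPGB : 0 < P_GB) (hγ : 0 < γ)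
    (Ψ : ℝ → ℝ) (hΨ : ∀ P, Ψ P = P * y ^ (-α) * γ * z ^ α / (lamGB * P_GB) + 1 / lamGF)
    (b : ℝ → ℝ) (hb : ∀ P, b P = Ψ P * σ2 * y ^ α / P) :
    Tendsto
      (fun P : ℝ =>
        -(1 / (log 2 * lamGF * Ψ P)) * exp (-(γ * σ2 * z ^ α) / (lamGB * P_GB)) *
          exp (b P) * expIntegralEi (-b P))
      atTop (nhds 0) := by
  set κ := y ^ (-α) * γ * z ^ α / (lamGB * P_GB) with hκ_def
  have hκ : 0 < κ := by positivity
  have hβ : 0 < κ * (σ2 * y ^ α) := by positivity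
  have hΨ_affine (P : ℝ) : Ψ P = κ * P + 1 / lamGF := by rw [hΨ, hκ_def]; ring
  have hΨ_lim : Tendsto Ψ atTop atTop := by
    rw [funext hΨ_affine]
    exact tendsto_atTop_add_const_right _ _ (tendsto_id.const_mul_atTop hκ)
  have hb_lim : Tendsto b atTop (nhds (κ * (σ2 * y ^ α))) :=
    ((tendsto_mul_add_div_self_atTop κ (1 / lamGF)).mul_const (σ2 * y ^ α)).congr
      fun P => by rw [hb, hΨ_affine]; ring
  have h_denom : Tendsto (fun P => log 2 * lamGF * Ψ P) atTop (Bornology.cobounded ℝ) :=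
    (tendsto_mul_left_cobounded (mul_ne_zero (log_pos one_lt_two).ne' hlamGF)).comp
      (hΨ_lim.mono_right IsOrderBornology.atTop_le_cobounded)
  have h_prefactor : Tendsto (fun P => -(1 / (log 2 * lamGF * Ψ P)) *
      exp (-(γ * σ2 * z ^ α) / (lamGB * P_GB))) atTop (nhds 0) := by
    simpa only [one_div, neg_zero, zero_mul, Function.comp_apply] using
      (tendsto_inv₀_cobounded.comp h_denom).neg.mul_const _
  simpa only [mul_assoc] using tendsto_zero_mul_exp_mul_expIntegralEi_neg h_prefactor
    (half_pos hβ) (hb_lim.eventually_const_le (half_lt_self hβ))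

/-- Remark 2 / Fig. 2: the exact conditional (on distances `y, z`) ergodic rate of the GF
user from Theorem 2, viewed as a function `R(P)` of the GF transmit power `P` with
`Ψ(P) = P·y⁻ᵅ·γ·zᵅ/(lamGB·P_GB) + 1/lamGF` and `b(P) = Ψ(P)·σ²·yᵅ/P`, tends to `0`
as `P → ∞`, where `Ei(-b) = ∫_{-∞}^{-b} e^u/u du`. -/
theorem gf_conditional_rate_tendsto_zero
    (σ2 α y z lamGF lamGB P_GB γ : ℝ)
    (hσ2 : 0 < σ2) (hα : 0 < α) (hy : 0 < y) (hz : 0 < z)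
    (hlamGF : 0 < lamGF) (hlamGB : 0 < lamGB) (hPGB : 0 < P_GB) (hγ : 0 < γ)
    (Ψ : ℝ → ℝ) (hΨ : ∀ P, Ψ P = P * y ^ (-α) * γ * z ^ α / (lamGB * P_GB) + 1 / lamGF)
    (b : ℝ → ℝ) (hb : ∀ P, b P = Ψ P * σ2 * y ^ α / P) :
    Filter.Tendsto
      (fun P : ℝ =>
        -(1 / (Real.log 2 * lamGF * Ψ P)) *
          Real.exp (-(γ * σ2 * z ^ α) / (lamGB * P_GB)) * Real.exp (b P) *
          ∫ u in Set.Iio (-(b P)), Real.exp u / u)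
      Filter.atTop (nhds 0) :=
  gf_conditional_rate_tendsto_zero_general σ2 α y z lamGF lamGB P_GB γ
    hσ2 hy hz hlamGF.ne' hlamGB hPGB hγ Ψ hΨ b hb
end
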